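/- (Grigorchuk–Zuk) The semigroup generated by the Basilica generators a and b is free non-abelian: the monoid homomorphism φ : FreeMonoid Bool →* Equiv.Perm (List Bool) determined by φ(FreeMonoid.of false) = a and φ(FreeMonoid.of true) = b is injective; that is, distinct positive words in a and b (including the empty word) represent distinct permutations. -/

import Mathlib

/-!
Read a positive word from the letter that acts first. Since `a = (1, b)`, and `b` is `(1, a)`
followed by the swap of the two subtrees, the section of a nonempty positive word at the vertex
`true` is a positive word, no longer than the given one, whose first letter is the opposite one.
Taking this section twice preserves the first letter and shortens every word of length at least two,
because a letter acting at the vertex `false` contributes nothing. Hence the action of a word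
determines its first letter, which can then be cancelled.
-/

namespace Basilica

mutual
  /-- Underlying map of the Basilica generator `a`. -/
  def aF : List Bool → List Bool
    | [] => []
    | false :: w => false :: w
    | true :: w => true :: bF w
  /-- Underlying map of the Basilica generator `b`. -/
  def bF : List Bool → List Bool
    | [] => []
    | false :: w => true :: w
    | true :: w => false :: aF w
end

mutual
  /-- Inverse of `aF`. -/
  def aI : List Bool → List Bool
    | [] => []
    | false :: w => false :: w
    | true :: w => true :: bI w
  /-- Inverse of `bF`. -/
  def bI : List Bool → List Bool
    | [] => []
    | false :: w => true :: aI w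
    | true :: w => false :: w
end

theorem basilica_inv : ∀ w : List Bool,
    aI (aF w) = w ∧ bI (bF w) = w ∧ aF (aI w) = w ∧ bF (bI w) = w := by
  intro w
  induction w with
  | nil => simp [aF, bF, aI, bI]
  | cons x w ih =>
    cases x <;>
      simp [aF, bF, aI, bI, ih.1, ih.2.1, ih.2.2.1, ih.2.2.2]

/-- The Basilica generator `a` as a permutation of the binary tree `List Bool`:
`a [] = []`, `a (false :: w) = false :: w`, `a (true :: w) = true :: b w`. -/
def a : Equiv.Perm (List Bool) :=
  ⟨aF, aI, fun w => (basilica_inv w).1, fun w => (basilica_inv w).2.2.1⟩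

/-- The Basilica generator `b` as a permutation of the binary tree `List Bool`:
`b [] = []`, `b (false :: w) = true :: w`, `b (true :: w) = false :: a w`. -/
def b : Equiv.Perm (List Bool) :=
  ⟨bF, bI, fun w => (basilica_inv w).2.1, fun w => (basilica_inv w).2.2.2⟩

/-- Underlying map of the pair `(g, h)` acting on the two subtrees. -/
def pairF (g h : List Bool → List Bool) : List Bool → List Bool
  | [] => []
  | false :: w => false :: g w
  | true :: w => true :: h w

/-- The permutation of `List Bool` acting as `g` on the subtree below `false`
and as `h` on the subtree below `true`, fixing the root. -/
def pair (g h : Equiv.Perm (List Bool)) : Equiv.Perm (List Bool) :=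
  ⟨pairF g h, pairF g.symm h.symm,
    fun w => by cases w with
      | nil => rfl
      | cons x w => cases x <;> simp [pairF],
    fun w => by cases w with
      | nil => rfl
      | cons x w => cases x <;> simp [pairF]⟩

/-- The Basilica group: the subgroup of `Equiv.Perm (List Bool)` generated by `a` and `b`. -/
def B : Subgroup (Equiv.Perm (List Bool)) := Subgroup.closure {a, b}

end Basilica

namespace Basilica

/-- The letters of positive words: `false` stands for `a` and `true` for `b`. -/
def gen : Bool → Equiv.Perm (List Bool)
  | false => a
  | true => b

theorem gen_cons_false (l : Bool) (v : List Bool) : gen l (false :: v) = l :: v := by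
  cases l <;> rfl

theorem gen_cons_true (l : Bool) (v : List Bool) :
    gen l (true :: v) = (!l) :: gen (!l) v := by
  cases l <;> rfl

theorem gen_ne_one (l : Bool) : gen l ≠ 1 := by
  intro h
  have hfix := DFunLike.congr_fun h [true, false]
  cases l <;> simp [gen_cons_true, gen_cons_false] at hfix

theorem gen_injective : Function.Injective gen := by
  intro l m h
  have hroot := DFunLike.congr_fun h [false]
  simpa only [gen_cons_false, List.cons.injEq, and_true] using hroot

/-- The permutation of the tree given by a positive word. The head of the list acts first, so the
list is the reverse of the word as written in a product of permutations. -/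
def wordPerm (W : List Bool) : Equiv.Perm (List Bool) :=
  (W.reverse.map gen).prod

theorem wordPerm_nil : wordPerm [] = 1 := rfl

theorem wordPerm_cons (l : Bool) (W : List Bool) :
    wordPerm (l :: W) = wordPerm W * gen l := by
  simp [wordPerm]

/-- The section of a positive word at the first-level vertex `x`, again as a positive word. A letter
`l` moves `false` to `l` with trivial section, and `true` to `!l` with section the letter `!l`. -/
def sectionAt : Bool → List Bool → List Bool
  | _, [] => []
  | false, l :: W => sectionAt l W
  | true, l :: W => (!l) :: sectionAt (!l) W

theorem tail_wordPerm_cons (W : List Bool) (x : Bool) (v : List Bool) :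
    (wordPerm W (x :: v)).tail = wordPerm (sectionAt x W) v := by
  induction W generalizing x v with
  | nil => rfl
  | cons l W ih =>
    cases x
    · rw [wordPerm_cons, Equiv.Perm.mul_apply, gen_cons_false, ih, sectionAt]
    · rw [wordPerm_cons, Equiv.Perm.mul_apply, gen_cons_true, ih, sectionAt, wordPerm_cons,
        Equiv.Perm.mul_apply]

theorem wordPerm_sectionAt_congr {U V : List Bool} (h : wordPerm U = wordPerm V) (x : Bool) :
    wordPerm (sectionAt x U) = wordPerm (sectionAt x V) := by
  ext1 v
  rw [← tail_wordPerm_cons, ← tail_wordPerm_cons, h]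

theorem length_sectionAt_le (x : Bool) (W : List Bool) : (sectionAt x W).length ≤ W.length := by
  induction W generalizing x with
  | nil => rw [sectionAt]
  | cons l W ih =>
    cases x
    · exact (ih l).trans (Nat.le_succ _)
    · exact Nat.succ_le_succ (ih (!l))

theorem length_sectionAt_false_lt {W : List Bool} (hW : W ≠ []) :
    (sectionAt false W).length < W.length := by
  obtain ⟨l, W, rfl⟩ := List.exists_cons_of_ne_nil hW
  exact Nat.lt_succ_of_le (length_sectionAt_le l W)

/-- The section of a positive word at the second-level vertex `[true, true]`. -/
def doubleSection (W : List Bool) : List Bool :=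
  sectionAt true (sectionAt true W)

theorem doubleSection_false_cons (W : List Bool) :
    doubleSection (false :: W) = false :: sectionAt false (sectionAt true W) := rfl

theorem doubleSection_true_cons (W : List Bool) :
    doubleSection (true :: W) = true :: sectionAt true (sectionAt false W) := rfl

theorem head?_doubleSection (W : List Bool) : (doubleSection W).head? = W.head? := by
  rcases W with _ | ⟨_ | _, W⟩ <;> rfl

theorem length_doubleSection_le (W : List Bool) : (doubleSection W).length ≤ W.length :=
  (length_sectionAt_le true _).trans (length_sectionAt_le true W)

theorem length_doubleSection_lt {W : List Bool} (hW : 1 < W.length) :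
    (doubleSection W).length < W.length := by
  rcases W with _ | ⟨_ | _, W⟩
  · exact absurd hW (Nat.not_lt_zero 1)
  · rw [doubleSection_false_cons, List.length_cons, List.length_cons, Nat.succ_lt_succ_iff]
    obtain ⟨l, W, rfl⟩ := List.exists_cons_of_length_pos (Nat.succ_lt_succ_iff.1 hW)
    calc (sectionAt false (sectionAt true (l :: W))).length
        < (sectionAt true (l :: W)).length := length_sectionAt_false_lt (List.cons_ne_nil _ _)
      _ ≤ (l :: W).length := length_sectionAt_le true _
  · rw [doubleSection_true_cons, List.length_cons, List.length_cons, Nat.succ_lt_succ_iff]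
    have hne : W ≠ [] := List.ne_nil_of_length_pos (Nat.succ_lt_succ_iff.1 hW)
    calc (sectionAt true (sectionAt false W)).length
        ≤ (sectionAt false W).length := length_sectionAt_le true _
      _ < W.length := length_sectionAt_false_lt hne

theorem head?_eq_of_wordPerm_eq_of_length_le_one {U V : List Bool} (hU : U.length ≤ 1)
    (hV : V.length ≤ 1) (h : wordPerm U = wordPerm V) : U.head? = V.head? := by
  rw [Nat.le_one_iff_eq_zero_or_eq_one, List.length_eq_zero_iff, List.length_eq_one_iff] at hU hV
  rcases hU with rfl | ⟨l, rfl⟩ <;> rcases hV with rfl | ⟨m, rfl⟩ <;>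
    simp only [wordPerm_cons, wordPerm_nil, one_mul] at h
  · rfl
  · exact absurd h.symm (gen_ne_one m)
  · exact absurd h (gen_ne_one l)
  · rw [gen_injective h]

theorem head?_eq_of_wordPerm_eq {U V : List Bool} (h : wordPerm U = wordPerm V) :
    U.head? = V.head? := by
  by_cases hshort : U.length ≤ 1 ∧ V.length ≤ 1
  · exact head?_eq_of_wordPerm_eq_of_length_le_one hshort.1 hshort.2 h
  · have hsec : wordPerm (doubleSection U) = wordPerm (doubleSection V) :=
      wordPerm_sectionAt_congr (wordPerm_sectionAt_congr h true) true
    rw [← head?_doubleSection U, ← head?_doubleSection V]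
    exact head?_eq_of_wordPerm_eq hsec
termination_by U.length + V.length
decreasing_by
  rcases not_and_or.1 hshort with hU | hV
  · exact add_lt_add_of_lt_of_le (length_doubleSection_lt (not_le.1 hU))
      (length_doubleSection_le V)
  · exact add_lt_add_of_le_of_lt (length_doubleSection_le U)
      (length_doubleSection_lt (not_le.1 hV))

theorem wordPerm_injective : Function.Injective wordPerm := by
  intro U V h
  induction U generalizing V with
  | nil => exact (List.head?_eq_none_iff.1 (head?_eq_of_wordPerm_eq h).symm).symm
  | cons l U ih =>
    obtain ⟨V, rfl⟩ := List.head?_eq_some_iff.1 (head?_eq_of_wordPerm_eq h).symm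
    rw [wordPerm_cons, wordPerm_cons, mul_left_inj] at h
    rw [ih h]

end Basilica

open Basilica in
/-- (Grigorchuk–Zuk) The semigroup generated by the Basilica generators `a` and `b`
is free non-abelian: the monoid homomorphism `FreeMonoid Bool →* Equiv.Perm (List Bool)`
sending `FreeMonoid.of false` to `a` and `FreeMonoid.of true` to `b` is injective. -/
theorem basilica_free_semigroup (φ : FreeMonoid Bool →* Equiv.Perm (List Bool))
    (hfa : φ (FreeMonoid.of false) = a) (hfb : φ (FreeMonoid.of true) = b) :
    Function.Injective φ := by
  have hφ : φ = FreeMonoid.lift gen := FreeMonoid.hom_eq (Bool.forall_bool.2 ⟨hfa, hfb⟩)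
  have hword (w : FreeMonoid Bool) : φ w = wordPerm w.toList.reverse := by
    rw [hφ, FreeMonoid.lift_apply, wordPerm, List.reverse_reverse]
  intro u v huv
  rw [hword, hword] at huv
  exact FreeMonoid.toList.injective (List.reverse_injective (wordPerm_injective huv))
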